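/- π²/10 equals ₄F₃(1/4, 1/4, 1/4, 3/4; 1/2, 5/4, 5/4; 1/16) − (1/72)·₄F₃(3/4, 3/4, 3/4, 5/4; 3/2, 7/4, 7/4; 1/16). Concretely, π²/10 equals the sum over n ≥ 0 of ((1/4)ₙ)³·(3/4)ₙ / ((1/2)ₙ·((5/4)ₙ)²·n!) · (1/16)ⁿ minus (1/72) times the sum over n ≥ 0 of ((3/4)ₙ)³·(5/4)ₙ / ((3/2)ₙ·((7/4)ₙ)²·n!) · (1/16)ⁿ. -/

import Mathlib

open Real

/-- The Pochhammer symbol (shifted factorial) `(a)ₙ` for a real number `a`. -/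
noncomputable def poch (a : ℝ) (n : ℕ) : ℝ := Polynomial.eval a (ascPochhammer ℝ n)


/-- The dilogarithm as a power series. -/
noncomputable def dilog (x : ℝ) : ℝ := ∑' n : ℕ, x ^ (n + 1) / ((n : ℝ) + 1) ^ 2

/-- Coefficients of `(1 + x) ^ (-1/2)`. -/
noncomputable def cf (n : ℕ) : ℝ := Ring.choose (-1 / 2 : ℝ) n

/-- The series with derivative `arsinh x / x`. -/
noncomputable def asF (x : ℝ) : ℝ := ∑' n : ℕ, cf n / (2 * (n : ℝ) + 1) ^ 2 * x ^ (2 * n + 1)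

/-- The power series of `arsinh`. -/
noncomputable def asS (x : ℝ) : ℝ := ∑' n : ℕ, cf n / (2 * (n : ℝ) + 1) * x ^ (2 * n + 1)

lemma eq_of_deriv_zero {f : ℝ → ℝ} {a b : ℝ} (hab : a < b) (hc : ContinuousOn f (Set.Icc a b))
    (hd : ∀ x ∈ Set.Ioo a b, HasDerivAt f 0 x) : f b = f a := by
  obtain ⟨c, hc, h⟩ := exists_hasDerivAt_eq_slope f (fun _ => 0) hab hc hd
  have : b - a ≠ 0 := by linarith
  field_simp at h
  linarith

lemma cf_zero : cf 0 = 1 := by simp [cf]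

lemma cf_succ (n : ℕ) : cf (n + 1) = - ((2 * n + 1) / (2 * n + 2)) * cf n := by
  have h1 := Ring.descPochhammer_eq_factorial_smul_choose (-1 / 2 : ℝ) n
  have h2 := Ring.descPochhammer_eq_factorial_smul_choose (-1 / 2 : ℝ) (n + 1)
  rw [descPochhammer_succ_right, Polynomial.smeval_mul, h1] at h2
  simp [Polynomial.smeval_sub, Nat.factorial_succ, Polynomial.smeval_natCast] at h2
  have hf : (n.factorial : ℝ) ≠ 0 := by positivity
  unfold cf
  have h3 : (Ring.choose (-1 / 2 : ℝ) n) * (-1 / 2 - n) = (n + 1) * Ring.choose (-1 / 2 : ℝ) (n + 1) := by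
    apply mul_left_cancel₀ hf
    linarith
  field_simp
  linarith

lemma cf_abs (n : ℕ) : |cf n| ≤ 1 := by
  induction n with
  | zero => simp [cf_zero]
  | succ n ih =>
    rw [cf_succ, abs_mul, abs_neg, abs_of_nonneg (by positivity)]
    have : ((2 * n + 1) / (2 * n + 2) : ℝ) ≤ 1 := by
      rw [div_le_one (by positivity)]; linarith
    have h0 : (0:ℝ) ≤ ((2 * n + 1) / (2 * n + 2) : ℝ) := by positivity
    nlinarith [abs_nonneg (cf n)]

lemma cf_hasSum {x : ℝ} (hx : |x| < 1) : HasSum (fun n => cf n * x ^ n) ((1 + x) ^ (-1 / 2 : ℝ)) := by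
  have h := (Real.one_add_rpow_hasFPowerSeriesOnBall_zero (a := -1 / 2)).hasSum (y := x)
    (by simpa [enorm_eq_nnnorm, ← NNReal.coe_lt_one] using hx)
  simpa [binomialSeries, FormalMultilinearSeries.coeff_ofScalars, cf, mul_comm] using h

lemma dilog_zero : dilog 0 = 0 := by simp [dilog]

lemma dilog_one : dilog 1 = π ^ 2 / 6 := by
  have h := hasSum_zeta_two
  rw [← hasSum_nat_add_iff' 1] at h
  simp at h
  simpa [dilog] using h.tsum_eq

lemma summable_sq : Summable (fun n : ℕ => 1 / ((n : ℝ) + 1) ^ 2) := by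
  have h := (summable_nat_add_iff 1).2 hasSum_zeta_two.summable
  simpa using h

lemma dilog_cont : ContinuousOn dilog (Set.Icc (-1) 1) := by
  unfold dilog
  refine continuousOn_tsum (fun n => by fun_prop) summable_sq ?_
  intro n x hx
  rw [norm_div, norm_pow, norm_pow]
  have h1 : ‖x‖ ≤ 1 := abs_le.2 hx
  have h2 : ‖((n : ℝ) + 1)‖ = (n : ℝ) + 1 := abs_of_nonneg (by positivity)
  rw [h2]
  gcongr
  exact pow_le_one₀ (norm_nonneg _) h1

lemma dilog_deriv {x : ℝ} (hx : |x| < 1) (h0 : x ≠ 0) :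
    HasDerivAt dilog (-log (1 - x) / x) x := by
  obtain ⟨r, hr1, hr2⟩ := exists_between hx
  have hr0 : 0 ≤ r := (abs_nonneg x).trans hr1.le
  have key : HasDerivAt dilog (∑' n : ℕ, x ^ n / ((n : ℝ) + 1)) x := by
    unfold dilog
    refine hasDerivAt_tsum_of_isPreconnected (t := Set.Ioo (-r) r) (y₀ := x) (u := fun n : ℕ => r ^ n)
      (summable_geometric_of_lt_one hr0 hr2) isOpen_Ioo isPreconnected_Ioo
      (g := fun (n : ℕ) z => z ^ (n + 1) / ((n : ℝ) + 1) ^ 2) (g' := fun (n : ℕ) z => z ^ n / ((n : ℝ) + 1))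
      ?_ ?_ (abs_lt.1 hr1) ?_ (abs_lt.1 hr1)
    · intro n y _
      have := (hasDerivAt_pow (n + 1) y).div_const (((n : ℝ) + 1) ^ 2)
      refine this.congr_deriv ?_
      push_cast
      field_simp
    · intro n y hy
      rw [norm_div, norm_pow]
      have h2 : ‖((n : ℝ) + 1)‖ = (n : ℝ) + 1 := abs_of_nonneg (by positivity)
      have h1 : ‖y‖ ≤ r := (abs_lt.2 hy).le
      rw [h2]
      calc ‖y‖ ^ n / ((n : ℝ) + 1) ≤ ‖y‖ ^ n := div_le_self (by positivity) (by simp)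
        _ ≤ r ^ n := by gcongr
    · refine Summable.of_norm_bounded summable_sq ?_
      intro n
      rw [norm_div, norm_pow, norm_pow]
      have h2 : ‖((n : ℝ) + 1)‖ = (n : ℝ) + 1 := abs_of_nonneg (by positivity)
      rw [h2]
      gcongr
      exact pow_le_one₀ (norm_nonneg _) hx.le
  refine key.congr_deriv ?_
  rw [eq_div_iff h0, ← (hasSum_pow_div_log_of_abs_lt_one hx).tsum_eq, ← tsum_mul_right]
  congr 1
  ext n
  rw [pow_succ]
  ring

lemma term_bound (n : ℕ) (x d : ℝ) (hd : 1 ≤ d) (hx : |x| ≤ 3 / 4) :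
    ‖cf n / d * x ^ (2 * n)‖ ≤ (9 / 16 : ℝ) ^ n := by
  rw [norm_mul, norm_div, norm_pow, pow_mul]
  have h1 : ‖x‖ ≤ 3 / 4 := hx
  have h2 : ‖d‖ = d := abs_of_nonneg (by linarith)
  have h3 : ‖x‖ ^ 2 ≤ 9 / 16 := by nlinarith [norm_nonneg x]
  rw [h2]
  have h4 : ‖cf n‖ / d ≤ 1 := by
    rw [div_le_one (by linarith)]
    exact (cf_abs n).trans hd
  calc ‖cf n‖ / d * (‖x‖ ^ 2) ^ n ≤ 1 * (9 / 16) ^ n := by gcongr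
    _ = _ := one_mul _

lemma summ_916 : Summable (fun n : ℕ => (9 / 16 : ℝ) ^ n) :=
  summable_geometric_of_lt_one (by norm_num) (by norm_num)

lemma term_deriv (d : ℕ → ℝ) (hd : ∀ n, 1 ≤ d n) {x : ℝ} (hx : |x| < 3 / 4) :
    HasDerivAt (fun x => ∑' n : ℕ, cf n / (d n * (2 * (n : ℝ) + 1)) * x ^ (2 * n + 1))
      (∑' n : ℕ, cf n / d n * x ^ (2 * n)) x := by
  refine hasDerivAt_tsum_of_isPreconnected (t := Set.Ioo (-(3 / 4)) (3 / 4)) (y₀ := 0)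
    summ_916 isOpen_Ioo isPreconnected_Ioo
    (g := fun n z => cf n / (d n * (2 * (n : ℝ) + 1)) * z ^ (2 * n + 1))
    (g' := fun n z => cf n / d n * z ^ (2 * n))
    ?_ ?_ (by norm_num) ?_ (abs_lt.1 hx)
  · intro n y _
    have := (hasDerivAt_pow (2 * n + 1) y).const_mul (cf n / (d n * (2 * (n : ℝ) + 1)))
    refine this.congr_deriv ?_
    have : d n ≠ 0 := by linarith [hd n]
    push_cast
    field_simp
  · intro n y hy
    exact term_bound n y (d n) (hd n) (abs_lt.2 hy).le
  · simp [summable_zero]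

lemma asS_eq {x : ℝ} (h0 : 0 < x) (hx : x < 3 / 4) : asS x = arsinh x := by
  have hd : ∀ y : ℝ, |y| < 3 / 4 → HasDerivAt (fun y => asS y - arsinh y) 0 y := by
    intro y hy
    have h1 := term_deriv (fun _ => 1) (fun _ => le_rfl) hy
    have h2 : HasDerivAt asS (∑' n : ℕ, cf n / 1 * y ^ (2 * n)) y := by
      unfold asS
      simpa using h1
    refine (h2.sub (hasDerivAt_arsinh y)).congr_deriv ?_
    have h3 : |y ^ 2| < 1 := by
      rw [abs_pow]
      nlinarith [abs_nonneg y]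
    have h4 := (cf_hasSum h3).tsum_eq
    simp only [pow_mul, div_one]
    rw [h4, sub_eq_zero, Real.sqrt_eq_rpow, ← Real.rpow_neg (by positivity)]
    norm_num
  have := eq_of_deriv_zero h0
    (fun y hy => (hd y (abs_lt.2 ⟨by linarith [hy.1], by linarith [hy.2]⟩)).continuousAt.continuousWithinAt)
    (fun y hy => hd y (abs_lt.2 ⟨by linarith [hy.1], by linarith [hy.2]⟩))
  have h5 : asS 0 = 0 := by simp [asS]
  rw [h5, arsinh_zero] at this
  linarith

lemma asF_deriv0 {x : ℝ} (hx : |x| < 3 / 4) :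
    HasDerivAt asF (∑' n : ℕ, cf n / (2 * (n : ℝ) + 1) * x ^ (2 * n)) x := by
  have h1 := term_deriv (fun n => 2 * (n : ℝ) + 1) (fun n => by simp) hx
  unfold asF
  simpa [pow_two] using h1

lemma asF_deriv {x : ℝ} (h0 : 0 < x) (hx : x < 3 / 4) : HasDerivAt asF (arsinh x / x) x := by
  refine (asF_deriv0 (abs_lt.2 ⟨by linarith, hx⟩)).congr_deriv ?_
  rw [eq_div_iff h0.ne', ← asS_eq h0 hx, asS, ← tsum_mul_right]
  congr 1
  ext n
  ring

lemma dilog_dup {a : ℝ} (h0 : 0 < a) (h1 : a < 1) :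
    dilog a + dilog (-a) = dilog (a ^ 2) / 2 := by
  have h := eq_of_deriv_zero (f := fun x => dilog x + dilog (-x) - dilog (x ^ 2) / 2) h0 ?_ ?_
  · simp [dilog_zero] at h
    linarith
  · refine ((dilog_cont.mono ?_).add (dilog_cont.comp (by fun_prop) ?_)).sub
      ((dilog_cont.comp (by fun_prop) ?_).div_const 2)
    · intro x hx; exact ⟨by linarith [hx.1], by linarith [hx.2]⟩
    · intro x hx; exact ⟨by linarith [hx.2], by linarith [hx.1]⟩
    · intro x hx
      have := hx.1
      have := hx.2
      constructor <;> nlinarith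
  · rintro x ⟨hx0, hxa⟩
    have hx1 : x < 1 := by linarith
    have d1 := dilog_deriv (x := x) (abs_lt.2 ⟨by linarith, hx1⟩) hx0.ne'
    have d2 := dilog_deriv (x := -x) (abs_lt.2 ⟨by linarith, by linarith⟩) (by linarith)
    have d3 := dilog_deriv (x := x ^ 2) (abs_lt.2 ⟨by nlinarith, by nlinarith⟩) (by positivity)
    have d2' := HasDerivAt.comp x d2 (hasDerivAt_neg x)
    have d3' := HasDerivAt.comp (h := fun x : ℝ => x ^ 2) x d3 (hasDerivAt_pow 2 x)
    refine ((d1.add d2').sub (d3'.div_const 2)).congr_deriv ?_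
    have : log (1 - x ^ 2) = log (1 - x) + log (1 - -x) := by
      rw [← log_mul (by linarith) (by linarith)]
      congr 1; ring
    rw [this]
    field_simp
    ring

lemma dilog_landen {a : ℝ} (h0 : 0 < a) (h1 : a < 1 / 2) :
    dilog a + dilog (-(a / (1 - a))) = - log (1 - a) ^ 2 / 2 := by
  have h := eq_of_deriv_zero
    (f := fun x => dilog x + dilog (-(x / (1 - x))) + log (1 - x) ^ 2 / 2) h0 ?_ ?_
  · simp [dilog_zero] at h
    linarith
  · refine ((dilog_cont.mono ?_).add (dilog_cont.comp ?_ ?_)).add ?_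
    · intro x hx; exact ⟨by linarith [hx.1], by linarith [hx.2]⟩
    · refine ContinuousOn.neg (ContinuousOn.div (by fun_prop) (by fun_prop) ?_)
      intro x hx
      linarith [hx.2]
    · intro x hx
      have := hx.1
      have := hx.2
      have h2 : x / (1 - x) ≤ 1 := by rw [div_le_one (by linarith)]; linarith
      have h3 : 0 ≤ x / (1 - x) := div_nonneg hx.1 (by linarith)
      constructor <;> linarith
    · refine ((ContinuousOn.log (by fun_prop) ?_).pow 2).div_const 2
      intro x hx
      linarith [hx.2]
  · rintro x ⟨hx0, hxa⟩
    have hx1 : 0 < 1 - x := by linarith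
    have h2 : x / (1 - x) < 1 := by rw [div_lt_one (by linarith)]; linarith
    have h3 : 0 < x / (1 - x) := by positivity
    have d1 := dilog_deriv (x := x) (abs_lt.2 ⟨by linarith, by linarith⟩) hx0.ne'
    have d2 := dilog_deriv (x := -(x / (1 - x))) (abs_lt.2 ⟨by linarith, by linarith⟩) (by linarith)
    have e1 : HasDerivAt (fun x : ℝ => 1 - x) (-1) x := by
      simpa using (hasDerivAt_id x).const_sub 1
    have e2 := ((hasDerivAt_id x).div e1 hx1.ne').neg
    have d2' := HasDerivAt.comp x d2 e2
    have d3 := ((e1.log hx1.ne').pow 2).div_const 2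
    refine ((d1.add d2').add d3).congr_deriv ?_
    have : log (1 - -(x / (1 - x))) = - log (1 - x) := by
      rw [← log_inv]
      congr 1; field_simp; ring
    rw [this]
    simp
    field_simp
    ring

lemma dilog_reflect {a : ℝ} (h0 : 0 < a) (h1 : a < 1) :
    dilog a + dilog (1 - a) + log a * log (1 - a) = π ^ 2 / 6 := by
  have h := eq_of_deriv_zero
    (f := fun x => dilog x + dilog (1 - x) + log x * log (1 - x)) h0 ?_ ?_
  · simp [dilog_zero, dilog_one] at h
    linarith
  · refine ((dilog_cont.mono ?_).add (dilog_cont.comp (by fun_prop) ?_)).add ?_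
    · intro x hx; exact ⟨by linarith [hx.1], by linarith [hx.2]⟩
    · intro x hx; exact ⟨by linarith [hx.2], by linarith [hx.1]⟩
    · have hd : ∀ x < (1:ℝ), DifferentiableAt ℝ (fun x : ℝ => log (1 - x)) x := by
        intro x hx
        exact DifferentiableAt.log (by fun_prop) (by linarith)
      have hc : ContinuousOn (dslope (fun x : ℝ => log (1 - x)) 0) (Set.Iio 1) := by
        refine (continuousOn_dslope (Iio_mem_nhds one_pos)).2 ⟨?_, hd 0 one_pos⟩
        exact fun x hx => (hd x hx).continuousAt.continuousWithinAt
      have hm : ContinuousOn (fun x : ℝ => (x * log x) * dslope (fun x : ℝ => log (1 - x)) 0 x)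
          (Set.Icc 0 a) :=
        continuous_mul_log.continuousOn.mul (hc.mono fun x hx => lt_of_le_of_lt hx.2 h1)
      refine hm.congr ?_
      intro x _
      have := sub_smul_dslope (fun x : ℝ => log (1 - x)) 0 x
      simp at this
      simp only []
      rw [← this]
      ring
  · rintro x ⟨hx0, hxa⟩
    have hx1 : 0 < 1 - x := by linarith
    have d1 := dilog_deriv (x := x) (abs_lt.2 ⟨by linarith, by linarith⟩) hx0.ne'
    have d2 := dilog_deriv (x := 1 - x) (abs_lt.2 ⟨by linarith, by linarith⟩) (by linarith)
    have e1 : HasDerivAt (fun x : ℝ => 1 - x) (-1) x := by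
      simpa using (hasDerivAt_id x).const_sub 1
    have d2' := HasDerivAt.comp x d2 e1
    have d3 := (hasDerivAt_log hx0.ne').mul (e1.log hx1.ne')
    refine ((d1.add d2').add d3).congr_deriv ?_
    simp only [sub_sub_cancel]
    field_simp
    ring

lemma asF_sinh {T : ℝ} (h0 : 0 < T) (h1 : sinh T < 3 / 4) :
    asF (sinh T) = T ^ 2 / 2 + dilog (1 - exp (-2 * T)) / 2 := by
  have h := eq_of_deriv_zero
    (f := fun t => asF (sinh t) - t ^ 2 / 2 - dilog (1 - exp (-2 * t)) / 2) h0 ?_ ?_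
  · have h5 : asF 0 = 0 := by simp [asF]
    simp [dilog_zero, h5] at h
    simp
    linarith
  · refine ContinuousOn.sub (ContinuousOn.sub ?_ (by fun_prop))
      ((dilog_cont.comp (by fun_prop) ?_).div_const 2)
    · intro x hx
      refine ContinuousAt.continuousWithinAt ?_
      refine ContinuousAt.comp (f := sinh) (g := asF) ?_ continuous_sinh.continuousAt
      have h2 : 0 ≤ sinh x := sinh_nonneg_iff.2 hx.1
      have h3 : sinh x ≤ sinh T := sinh_le_sinh.2 hx.2
      exact (asF_deriv0 (abs_lt.2 ⟨by linarith, by linarith⟩)).continuousAt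
    · intro x hx
      have h2 : exp (-2 * x) ≤ 1 := exp_le_one_iff.2 (by linarith [hx.1])
      have h3 := exp_pos (-2 * x)
      constructor <;> linarith
  · rintro x ⟨hx0, hxa⟩
    have h2 : 0 < sinh x := sinh_pos_iff.2 hx0
    have h3 : sinh x < sinh T := sinh_lt_sinh.2 hxa
    have h4 : exp (-2 * x) < 1 := exp_lt_one_iff.2 (by linarith)
    have h5 := exp_pos (-2 * x)
    have d1 := (asF_deriv h2 (by linarith)).comp x (hasDerivAt_sinh x)
    have d2 := dilog_deriv (x := 1 - exp (-2 * x)) (abs_lt.2 ⟨by linarith, by linarith⟩)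
      (by linarith)
    have e1 : HasDerivAt (fun x : ℝ => 1 - exp (-2 * x)) (2 * exp (-2 * x)) x := by
      have := (((hasDerivAt_id x).const_mul (-2)).exp).const_sub 1
      refine this.congr_deriv ?_
      simp
      ring
    have d2' := HasDerivAt.comp x d2 e1
    refine ((d1.sub ((hasDerivAt_pow 2 x).div_const 2)).sub (d2'.div_const 2)).congr_deriv ?_
    have h6 : 1 - exp (-2 * x) ≠ 0 := by linarith
    have h7 : cosh x / sinh x = (1 + exp (-2 * x)) / (1 - exp (-2 * x)) := by
      rw [div_eq_div_iff h2.ne' h6]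
      have : exp (-2 * x) = exp (-x) * exp (-x) := by rw [← exp_add]; ring_nf
      have h8 : exp x * exp (-x) = 1 := by rw [← exp_add]; simp
      rw [this, cosh_eq, sinh_eq]
      linear_combination (-exp (-x)) * h8
    rw [arsinh_sinh, div_mul_eq_mul_div, mul_div_assoc, h7]
    rw [sub_sub_cancel, log_exp]
    generalize exp (-2 * x) = q at h6
    norm_num
    field_simp
    ring

lemma asF_half : asF (1 / 2) = π ^ 2 / 20 := by
  set ρ : ℝ := (√5 - 1) / 2 with hρ
  have h5 : √5 ^ 2 = 5 := Real.sq_sqrt (by norm_num)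
  have hs0 : 2.2 < √5 := Real.lt_sqrt_of_sq_lt (by norm_num)
  have hs1 : √5 < 2.3 := (Real.sqrt_lt' (by norm_num)).2 (by norm_num)
  have hr0 : 0 < ρ := by rw [hρ]; linarith
  have hr1 : ρ < 0.7 := by rw [hρ]; linarith
  have hr2 : ρ ^ 2 = 1 - ρ := by rw [hρ]; linear_combination h5 / 4
  have hl : log (ρ ^ 2) = 2 * log ρ := by simp
  have hsinh : sinh (- log ρ) = 1 / 2 := by
    rw [sinh_eq, neg_neg, exp_log hr0, exp_neg, exp_log hr0]
    field_simp
    linarith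
  have hT : 0 < - log ρ := by linarith [log_neg hr0 (by linarith)]
  have a1 := asF_sinh hT (by rw [hsinh]; norm_num)
  have he : exp (-2 * -log ρ) = ρ ^ 2 := by
    rw [show -2 * -log ρ = log (ρ ^ 2) by rw [hl]; ring, exp_log (by positivity)]
  have a2 := dilog_dup hr0 (by linarith)
  have a3 := dilog_landen (a := ρ ^ 2) (by positivity) (by rw [hr2, hρ]; linarith)
  have a4 := dilog_reflect hr0 (by linarith)
  have e1 : 1 - ρ ^ 2 = ρ := by linarith
  have e2 : ρ ^ 2 / ρ = ρ := by field_simp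
  rw [hsinh, he, e1] at a1
  rw [e1, e2] at a3
  rw [← hr2, hl] at a4
  rw [a1]
  linarith

lemma poch_zero (a : ℝ) : poch a 0 = 1 := by simp [poch]

lemma poch_succ (a : ℝ) (n : ℕ) : poch a (n + 1) = poch a n * (a + n) := by
  simp [poch, ascPochhammer_succ_eval]

lemma poch_pos {a : ℝ} (ha : 0 < a) (n : ℕ) : 0 < poch a n := by
  exact ascPochhammer_pos n a ha

lemma poch_shift (a : ℝ) (n : ℕ) : poch a n * (a + n) = a * poch (a + 1) n := by
  induction n with
  | zero => simp [poch_zero]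
  | succ n ih =>
    rw [poch_succ, ih, poch_succ]
    push_cast
    ring

lemma cf_even (n : ℕ) :
    cf (2 * n) = poch (1 / 4) n * poch (3 / 4) n / (poch (1 / 2) n * n.factorial) := by
  induction n with
  | zero => simp [poch_zero, cf_zero]
  | succ n ih =>
    have h := poch_pos (a := 1 / 2) (by norm_num) n
    rw [show 2 * (n + 1) = 2 * n + 1 + 1 by ring, cf_succ, cf_succ, ih]
    simp only [poch_succ, Nat.factorial_succ]
    push_cast
    field_simp
    ring

lemma cf_odd (n : ℕ) :
    cf (2 * n + 1) = - (1 / 2) * (poch (3 / 4) n * poch (5 / 4) n / (poch (3 / 2) n * n.factorial)) := by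
  induction n with
  | zero => simp [poch_zero, cf_zero, cf_succ]
  | succ n ih =>
    have h := poch_pos (a := 3 / 2) (by norm_num) n
    rw [show 2 * (n + 1) + 1 = 2 * n + 1 + 1 + 1 by ring, cf_succ, cf_succ, ih]
    simp only [poch_succ, Nat.factorial_succ]
    push_cast
    field_simp
    ring

theorem pi_sq_div_ten_as_fourF_three_combination :
    π^2 / 10
      = (∑' n : ℕ, (poch (1/4) n)^3 * poch (3/4) n /
            (poch (1/2) n * (poch (5/4) n)^2 * (n.factorial : ℝ)) * (1/16 : ℝ)^n)
        - (1/72) * (∑' n : ℕ, (poch (3/4) n)^3 * poch (5/4) n /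
            (poch (3/2) n * (poch (7/4) n)^2 * (n.factorial : ℝ)) * (1/16 : ℝ)^n) := by
  set b : ℕ → ℝ := fun m => cf m / (2 * (m : ℝ) + 1) ^ 2 * (1 / 2) ^ (2 * m) with hb
  have hsum : Summable b := by
    refine Summable.of_norm_bounded summ_916 fun n => ?_
    refine term_bound n (1 / 2) _ ?_ (by norm_num [abs_of_pos])
    exact one_le_pow₀ (by simp)
  have hF : ∑' m, b m = π ^ 2 / 10 := by
    have h := asF_half
    have h2 : asF (1 / 2) = (∑' m, b m) * (1 / 2) := by
      rw [asF, ← tsum_mul_right]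
      congr 1
      ext n
      simp only [hb]
      ring
    linarith
  have he := tsum_even_add_odd (f := b)
    (hsum.comp_injective (i := fun k => 2 * k) fun x y h => by simpa using h)
    (hsum.comp_injective (i := fun k => 2 * k + 1) fun x y h => by simpa using h)
  rw [← hF, ← he, sub_eq_add_neg, ← neg_mul, ← tsum_mul_left]
  congr 2
  · ext n
    have h1 := poch_shift (1 / 4) n
    have h2 := poch_pos (a := 1 / 2) (by norm_num) n
    have h3 := poch_pos (a := 1 / 4) (by norm_num) n
    have h4 : poch (5 / 4) n = poch (1 / 4) n * (4 * n + 1) := by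
      norm_num at h1 ⊢
      linarith
    simp only [hb]
    rw [cf_even, h4, pow_mul, pow_mul]
    push_cast
    norm_num
    field_simp
    ring
  · ext n
    have h1 := poch_shift (3 / 4) n
    have h2 := poch_pos (a := 3 / 2) (by norm_num) n
    have h3 := poch_pos (a := 3 / 4) (by norm_num) n
    have h4 : poch (7 / 4) n = poch (3 / 4) n * ((4 * n + 3) / 3) := by
      norm_num at h1 ⊢
      linarith
    simp only [hb]
    rw [cf_odd, h4, pow_mul (1 / 2 : ℝ) 2, pow_succ ((1 / 2 : ℝ) ^ 2), pow_mul ((1 / 2 : ℝ) ^ 2)]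
    push_cast
    norm_num
    field_simp
    ring
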